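/- arXiv:2212.08193 — 3 statements merged into one kernel-verified Lean document; each statement's English description precedes it below -/
import Mathlib

section
/- Let G be a simple graph and S ⊆ V(G). Then S is an ERR:LD set of G (i.e., S satisfies conditions (i)–(iv)) if and only if (a) for every v ∈ V(G), |N[v] ∩ S| ≥ 3, and (b) for all distinct u, v ∈ V(G), |((N(v) ∩ S) △ (N(u) ∩ S)) − {v, u}| ≥ 3 − |{v, u} ∩ S|. -/
open scoped symmDiff

variable {V : Type*}

/-- The closed neighborhood `N[v]` of a vertex. -/
def closedNbhd (G : SimpleGraph V) (v : V) : Set V := insert v (G.neighborSet v)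

/-- `S` is an error-correcting locating-dominating (ERR:LD) set: conditions (i)-(iv). -/
def IsErrLD (G : SimpleGraph V) (S : Set V) : Prop :=
  (∀ v : V, 3 ≤ (closedNbhd G v ∩ S).encard) ∧
  (∀ v ∈ S, ∀ u ∈ S, u ≠ v →
    1 ≤ ((((G.neighborSet v ∩ S) ∆ (G.neighborSet u ∩ S)) \ {v, u}).encard)) ∧
  (∀ v ∉ S, ∀ u ∈ S,
    2 ≤ ((((G.neighborSet v ∩ S) ∆ (G.neighborSet u ∩ S)) \ {u}).encard)) ∧
  (∀ v ∉ S, ∀ u ∉ S, u ≠ v →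
    3 ≤ (((G.neighborSet v ∩ S) ∆ (G.neighborSet u ∩ S)).encard))

/-!
The vertices distinguishing `u` from `v` all lie in `S`, so deleting `{v, u}` from their set only
deletes `{v, u} ∩ S`. This trace is the pair, a singleton or empty according to how many of `u`, `v`
lie in `S`, and in these three cases the uniform inequality is the one in (ii), (iii) and (iv).
-/

theorem sdiff_inf_of_le {α : Type*} [GeneralizedCoheytingAlgebra α] {a c : α} (hac : a ≤ c)
    (b : α) : a \ (b ⊓ c) = a \ b := by
  rw [sdiff_inf, sdiff_eq_bot_iff.mpr hac, sup_bot_eq]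

theorem pairwise_iff_of_symm {α : Type*} (r : α → α → Prop) [Std.Symm r] (s : Set α) :
    Pairwise r ↔
      s.Pairwise r ∧ (∀ a ∉ s, ∀ b ∈ s, r a b) ∧ sᶜ.Pairwise r := by
  have cross : (∀ a ∈ sᶜ, ∀ b ∈ s, a ≠ b → r a b) ↔ ∀ a ∉ s, ∀ b ∈ s, r a b :=
    forall₄_congr fun a ha b hb => forall_prop_of_true (ne_of_mem_of_not_mem hb ha).symm
  rw [← Set.pairwise_univ, ← Set.compl_union_self s, Set.pairwise_union_of_symm, cross]
  exact ⟨fun ⟨hc, hs, hcs⟩ => ⟨hs, hcs, hc⟩, fun ⟨hs, hcs, hc⟩ => ⟨hc, hs, hcs⟩⟩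

/-- The elements of `S` adjacent to exactly one of `v` and `u`: the detectors that tell the two
vertices apart by adjacency. -/
def distinguishers (G : SimpleGraph V) (S : Set V) (v u : V) : Set V :=
  (G.neighborSet v ∩ S) ∆ (G.neighborSet u ∩ S)

/-- The uniform separation condition on the pair `v`, `u`, with threshold `k` in place of `3`. The
subtraction in `ℕ∞` is truncated, so it is vacuous when `k` is at most the number of elements of
`S` in the pair. -/
def UniformlySeparated (G : SimpleGraph V) (S : Set V) (k : ℕ∞) (v u : V) : Prop :=
  k - (({v, u} : Set V) ∩ S).encard ≤ (distinguishers G S v u \ {v, u}).encard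

section Separation

variable (G : SimpleGraph V)

theorem distinguishers_subset (S : Set V) (v u : V) : distinguishers G S v u ⊆ S :=
  Set.symmDiff_subset_union.trans (Set.union_subset Set.inter_subset_right Set.inter_subset_right)

theorem distinguishers_comm (S : Set V) (v u : V) :
    distinguishers G S v u = distinguishers G S u v :=
  symmDiff_comm _ _

instance UniformlySeparated.instSymm (S : Set V) (k : ℕ∞) :
    Std.Symm (UniformlySeparated G S k) where
  symm v u h := by
    rwa [UniformlySeparated, Set.pair_comm, distinguishers_comm]

variable {S : Set V} (k : ℕ∞) {u v : V}

theorem uniformlySeparated_iff_sdiff_trace :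
    UniformlySeparated G S k v u ↔
      k - (({v, u} : Set V) ∩ S).encard ≤
        (distinguishers G S v u \ ({v, u} ∩ S)).encard := by
  have sdiff_trace : distinguishers G S v u \ ({v, u} ∩ S) = distinguishers G S v u \ {v, u} :=
    sdiff_inf_of_le (distinguishers_subset G S v u) _
  rw [UniformlySeparated, sdiff_trace]

theorem uniformlySeparated_iff_of_mem_of_mem (hv : v ∈ S) (hu : u ∈ S) (huv : u ≠ v) :
    UniformlySeparated G S k v u ↔ k - 2 ≤ (distinguishers G S v u \ {v, u}).encard := by
  have trace : ({v, u} : Set V) ∩ S = {v, u} :=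
    Set.inter_eq_left.mpr (Set.pair_subset hv hu)
  rw [UniformlySeparated, trace, Set.encard_pair huv.symm]

theorem uniformlySeparated_iff_of_notMem_of_mem (hv : v ∉ S) (hu : u ∈ S) :
    UniformlySeparated G S k v u ↔ k - 1 ≤ (distinguishers G S v u \ {u}).encard := by
  have trace : ({v, u} : Set V) ∩ S = {u} := by
    rw [Set.insert_inter_of_notMem hv, Set.inter_eq_left.mpr (Set.singleton_subset_iff.mpr hu)]
  rw [uniformlySeparated_iff_sdiff_trace, trace, Set.encard_singleton]

theorem uniformlySeparated_iff_of_notMem_of_notMem (hv : v ∉ S) (hu : u ∉ S) :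
    UniformlySeparated G S k v u ↔ k ≤ (distinguishers G S v u).encard := by
  have trace : ({v, u} : Set V) ∩ S = ∅ := by
    rw [Set.insert_inter_of_notMem hv, Set.singleton_inter_eq_empty.mpr hu]
  rw [uniformlySeparated_iff_sdiff_trace, trace, Set.encard_empty, tsub_zero, Set.sdiff_empty]

theorem pairwise_uniformlySeparated_iff :
    Pairwise (UniformlySeparated G S k) ↔
      (∀ v ∈ S, ∀ u ∈ S, u ≠ v → k - 2 ≤ (distinguishers G S v u \ {v, u}).encard) ∧
      (∀ v ∉ S, ∀ u ∈ S, k - 1 ≤ (distinguishers G S v u \ {u}).encard) ∧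
      (∀ v ∉ S, ∀ u ∉ S, u ≠ v → k ≤ (distinguishers G S v u).encard) := by
  rw [pairwise_iff_of_symm _ S]
  refine and_congr ?_ (and_congr ?_ ?_)
  · exact forall₄_congr fun v hv u hu => imp_congr_ctx ne_comm fun huv =>
      uniformlySeparated_iff_of_mem_of_mem G k hv hu huv
  · exact forall₄_congr fun v hv u hu => uniformlySeparated_iff_of_notMem_of_mem G k hv hu
  · exact forall₄_congr fun v hv u hu => imp_congr_ctx ne_comm fun _ =>
      uniformlySeparated_iff_of_notMem_of_notMem G k hv hu

end Separation

theorem errLD_iff_uniform (G : SimpleGraph V) (S : Set V) :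
    IsErrLD G S ↔
      ((∀ v : V, 3 ≤ (closedNbhd G v ∩ S).encard) ∧
       (∀ u v : V, u ≠ v →
         3 - (({v, u} : Set V) ∩ S).encard ≤
           (((G.neighborSet v ∩ S) ∆ (G.neighborSet u ∩ S)) \ {v, u}).encard)) := by
  have separation := pairwise_uniformlySeparated_iff G (S := S) 3
  rw [show (3 - 2 : ℕ∞) = 1 from rfl, show (3 - 1 : ℕ∞) = 2 from rfl] at separation
  refine and_congr_right fun _ => separation.symm.trans ?_
  exact ⟨fun h u v huv => h huv.symm, fun h v u hvu => h u v hvu.symm⟩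
end

section
/- Let G be a twin-free cubic (3-regular) simple graph, and let S̄ ⊆ V(G) be a set of vertices such that for any two distinct x, y ∈ S̄ every walk in G from x to y has length at least 5. Then S = V(G) − S̄ is an ERR:LD set of G. -/
open scoped symmDiff

variable {V : Type*}

/-- `G` is twin-free: no two distinct vertices `u, v` satisfy `N(u) = N(v)` or
`N[u] = N[v]`. -/
def TwinFree (G : SimpleGraph V) : Prop :=
  ∀ u v : V, u ≠ v →
    ¬(G.neighborSet u = G.neighborSet v ∨ closedNbhd G u = closedNbhd G v)

/-!
Write `T` for the set of non-detectors and `P(v, u) = N(v) \ N[u]` for the private neighbors of `v`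
against `u`. Away from `u` and `v` themselves, the detectors telling `u` and `v` apart are exactly
those in `P(v, u) ∪ P(u, v)`. In a twin-free regular graph of finite degree no `P(v, u)` is empty,
since an inclusion `N(v) ⊆ N[u]` would turn into an equality by counting. Finally, a private
neighbor that is itself in `T` keeps the rest of `T` away from the vertices around it, and these
supply further private neighbors that are detectors.
-/

/-- The private neighbors of `v` against `u`: those outside the closed neighborhood of `u`. -/
def privateNbhd (G : SimpleGraph V) (v u : V) : Set V := G.neighborSet v \ closedNbhd G u

/-- `T` is `n`-separated in `G`: distinct members of `T` are at distance at least `n`. Phrased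
through walks, so that members of different components count as infinitely far apart. -/
def WalkSeparated (G : SimpleGraph V) (n : ℕ) (T : Set V) : Prop :=
  ∀ x ∈ T, ∀ y ∈ T, x ≠ y → ∀ w : G.Walk x y, n ≤ w.length

variable {G : SimpleGraph V} {T : Set V} {u v : V}

theorem encard_closedNbhd (G : SimpleGraph V) (v : V) :
    (closedNbhd G v).encard = (G.neighborSet v).encard + 1 :=
  Set.encard_insert_of_notMem G.irrefl

theorem exists_walk_length_le_two_of_mem_closedNbhd {x y : V} (hx : x ∈ closedNbhd G v)
    (hy : y ∈ closedNbhd G v) : ∃ w : G.Walk x y, w.length ≤ 2 := by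
  obtain rfl | (hvx : G.Adj _ _) := hx <;> obtain rfl | (hvy : G.Adj _ _) := hy
  · exact ⟨.nil, by simp⟩
  · exact ⟨hvy.toWalk, by simp⟩
  · exact ⟨hvx.symm.toWalk, by simp⟩
  · exact ⟨.cons hvx.symm hvy.toWalk, by simp⟩

theorem symmDiff_neighborSet_inter_sdiff_pair (G : SimpleGraph V) (S : Set V) (v u : V) :
    ((G.neighborSet v ∩ S) ∆ (G.neighborSet u ∩ S)) \ {v, u} =
      (privateNbhd G v u ∪ privateNbhd G u v) ∩ S := by
  ext x
  have hv : x = v → ¬G.Adj v x := fun h hadj => hadj.ne h.symm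
  have hu : x = u → ¬G.Adj u x := fun h hadj => hadj.ne h.symm
  simp only [privateNbhd, closedNbhd, Set.mem_symmDiff, Set.mem_inter_iff, Set.mem_sdiff,
    Set.mem_union, Set.mem_insert_iff, Set.mem_singleton_iff, SimpleGraph.mem_neighborSet]
  tauto

theorem TwinFree.privateNbhd_nonempty (htf : TwinFree G) (huv : u ≠ v)
    (hfin : (G.neighborSet v).Finite)
    (hcard : (G.neighborSet u).encard ≤ (G.neighborSet v).encard) :
    (privateNbhd G v u).Nonempty := by
  by_contra hempty
  have hsub : G.neighborSet v ⊆ closedNbhd G u :=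
    Set.sdiff_eq_empty.1 (Set.not_nonempty_iff_eq_empty.1 hempty)
  refine htf v u huv.symm ?_
  by_cases hadj : G.Adj v u
  · have hclosed : closedNbhd G v ⊆ closedNbhd G u := Set.insert_subset (.inr hadj.symm) hsub
    refine .inr ((hfin.insert v).eq_of_subset_of_encard_le hclosed ?_)
    change (closedNbhd G u).encard ≤ (closedNbhd G v).encard
    simpa only [encard_closedNbhd] using add_le_add_left hcard 1
  · have hopen : G.neighborSet v ⊆ G.neighborSet u := (Set.subset_insert_iff_of_notMem hadj).1 hsub
    exact .inl (hfin.eq_of_subset_of_encard_le hopen hcard)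

namespace WalkSeparated

theorem mono {m n : ℕ} (hT : WalkSeparated G n T) (hmn : m ≤ n) : WalkSeparated G m T :=
  fun x hx y hy hxy w => hmn.trans (hT x hx y hy hxy w)

theorem eq_of_walk {n : ℕ} (hT : WalkSeparated G n T) {x y : V} (hx : x ∈ T) (hy : y ∈ T)
    (w : G.Walk x y) (hw : w.length < n) : x = y := by
  by_contra hxy
  exact hw.not_ge (hT x hx y hy hxy w)

theorem neighborSet_subset_compl (hT : WalkSeparated G 2 T) (hv : v ∈ T) :
    G.neighborSet v ⊆ Tᶜ :=
  fun _ hvx hxT => hvx.ne (hT.eq_of_walk hv hxT (.cons hvx .nil) (Nat.lt_succ_self 1))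

theorem closedNbhd_inter_subsingleton (hT : WalkSeparated G 3 T) (v : V) :
    (closedNbhd G v ∩ T).Subsingleton := by
  rintro x ⟨hvx, hxT⟩ y ⟨hvy, hyT⟩
  obtain ⟨w, hw⟩ := exists_walk_length_le_two_of_mem_closedNbhd hvx hvy
  exact hT.eq_of_walk hxT hyT w (Nat.lt_succ_of_le hw)

theorem encard_neighborSet_le_encard_closedNbhd_inter_compl (hT : WalkSeparated G 3 T) (v : V) :
    (G.neighborSet v).encard ≤ (closedNbhd G v ∩ Tᶜ).encard := by
  refine (ENat.add_le_add_iff_right ENat.one_ne_top).1 ?_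
  calc (G.neighborSet v).encard + 1
      = (closedNbhd G v \ T).encard + (closedNbhd G v ∩ T).encard := by
        rw [Set.encard_sdiff_add_encard_inter, encard_closedNbhd]
    _ ≤ (closedNbhd G v ∩ Tᶜ).encard + 1 := by
        rw [Set.sdiff_eq]
        gcongr
        exact Set.encard_le_one_iff_subsingleton.2 (hT.closedNbhd_inter_subsingleton v)

theorem neighborSet_subset_privateNbhd_inter_compl (hT : WalkSeparated G 4 T) (hv : v ∈ T) {b : V}
    (hb : b ∈ T) (hub : b ∈ closedNbhd G u) (hbv : b ≠ v) :
    G.neighborSet v ⊆ privateNbhd G v u ∩ Tᶜ := by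
  refine fun x (hvx : G.Adj v x) => ⟨⟨hvx, fun hux => hbv ?_⟩,
    (hT.mono (by norm_num)).neighborSet_subset_compl hv hvx⟩
  obtain ⟨w, hw⟩ := exists_walk_length_le_two_of_mem_closedNbhd hub hux
  refine hT.eq_of_walk hb hv (w.concat hvx.symm) ?_
  rw [SimpleGraph.Walk.length_concat]
  lia

theorem privateNbhd_union_inter_compl_nonempty (hT : WalkSeparated G 5 T)
    (hv : (G.neighborSet v).Nontrivial) (hvu : (privateNbhd G v u).Nonempty)
    (huv : (privateNbhd G u v).Nonempty) :
    ((privateNbhd G v u ∪ privateNbhd G u v) ∩ Tᶜ).Nonempty := by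
  obtain ⟨a, (hva : G.Adj v a), hua⟩ := hvu
  obtain ⟨b, hub, hvb⟩ := huv
  by_cases haT : a ∉ T
  · exact ⟨a, .inl ⟨hva, hua⟩, haT⟩
  by_cases hbT : b ∉ T
  · exact ⟨b, .inr ⟨hub, hvb⟩, hbT⟩
  rw [not_not] at haT hbT
  have hab : a ≠ b := fun h => hvb (.inr (h ▸ hva))
  obtain ⟨c, (hvc : G.Adj v c), hca⟩ := hv.exists_ne a
  have hcT : c ∉ T := fun h =>
    hca ((hT.mono (by norm_num)).closedNbhd_inter_subsingleton v ⟨.inr hvc, h⟩ ⟨.inr hva, haT⟩)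
  refine ⟨c, .inl ⟨hvc, fun huc => hab ?_⟩, hcT⟩
  obtain ⟨w, hw⟩ := exists_walk_length_le_two_of_mem_closedNbhd huc (.inr hub)
  refine hT.eq_of_walk haT hbT (.cons hva.symm (.cons hvc w)) ?_
  rw [SimpleGraph.Walk.length_cons, SimpleGraph.Walk.length_cons]
  lia

theorem privateNbhd_union_inter_compl_nontrivial (hT : WalkSeparated G 4 T) (hv : v ∈ T)
    (hdeg : (G.neighborSet v).Nontrivial) (hvu : (privateNbhd G v u).Nonempty)
    (huv : (privateNbhd G u v).Nonempty) :
    ((privateNbhd G v u ∪ privateNbhd G u v) ∩ Tᶜ).Nontrivial := by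
  obtain ⟨a, hva, hua⟩ := hvu
  obtain ⟨b, hub, hvb⟩ := huv
  by_cases hbT : b ∈ T
  · have hbv : b ≠ v := fun h => hvb (.inl h)
    exact hdeg.mono ((hT.neighborSet_subset_privateNbhd_inter_compl hv hbT (.inr hub) hbv).trans
      (Set.inter_subset_inter_left _ Set.subset_union_left))
  · have haT : a ∉ T := (hT.mono (by norm_num)).neighborSet_subset_compl hv hva
    exact ⟨a, ⟨.inl ⟨hva, hua⟩, haT⟩, b, ⟨.inr ⟨hub, hvb⟩, hbT⟩, fun h => hvb (.inr (h ▸ hva))⟩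

end WalkSeparated

theorem errLD_of_distant_nondetectors_general (G : SimpleGraph V)
    (hdeg : ∀ v : V, 3 ≤ (G.neighborSet v).encard)
    (hpriv : ∀ u v : V, u ≠ v → (privateNbhd G v u).Nonempty)
    (Sbar : Set V) (hfar : WalkSeparated G 5 Sbar) :
    IsErrLD G Sbarᶜ := by
  have hfar₃ : WalkSeparated G 3 Sbar := hfar.mono (by norm_num)
  have hfar₄ : WalkSeparated G 4 Sbar := hfar.mono (by norm_num)
  have hnontrivial (v : V) : (G.neighborSet v).Nontrivial :=
    Set.one_lt_encard_iff_nontrivial.1 (lt_of_lt_of_le (by norm_num) (hdeg v))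
  refine ⟨fun v => ?_, fun v _ u _ huv => ?_, fun v hv u hu => ?_, fun v hv u hu huv => ?_⟩
  · exact (hdeg v).trans (hfar₃.encard_neighborSet_le_encard_closedNbhd_inter_compl v)
  · rw [symmDiff_neighborSet_inter_sdiff_pair, Set.one_le_encard_iff_nonempty]
    exact hfar.privateNbhd_union_inter_compl_nonempty (hnontrivial v) (hpriv u v huv)
      (hpriv v u huv.symm)
  · rw [Set.notMem_compl_iff] at hv
    have huv : u ≠ v := fun h => hu (h ▸ hv)
    have htwo := Order.add_one_le_of_lt <| Set.one_lt_encard_iff_nontrivial.2 <|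
      hfar₄.privateNbhd_union_inter_compl_nontrivial hv (hnontrivial v) (hpriv u v huv)
        (hpriv v u huv.symm)
    rw [one_add_one_eq_two, ← symmDiff_neighborSet_inter_sdiff_pair] at htwo
    exact htwo.trans (Set.encard_le_encard (Set.sdiff_subset_sdiff_right (by simp)))
  · rw [Set.notMem_compl_iff] at hv hu
    refine (hdeg v).trans (Set.encard_le_encard ?_)
    calc G.neighborSet v
        ⊆ privateNbhd G v u ∩ Sbarᶜ :=
          hfar₄.neighborSet_subset_privateNbhd_inter_compl hv hu (.inl rfl) huv
      _ ⊆ (privateNbhd G v u ∪ privateNbhd G u v) ∩ Sbarᶜ :=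
          Set.inter_subset_inter_left _ Set.subset_union_left
      _ ⊆ (G.neighborSet v ∩ Sbarᶜ) ∆ (G.neighborSet u ∩ Sbarᶜ) := by
          rw [← symmDiff_neighborSet_inter_sdiff_pair]
          exact Set.sdiff_subset

theorem errLD_of_distant_nondetectors (G : SimpleGraph V)
    (hcubic : ∀ v : V, (G.neighborSet v).encard = 3) (htf : TwinFree G)
    (Sbar : Set V)
    (hfar : ∀ x ∈ Sbar, ∀ y ∈ Sbar, x ≠ y → ∀ w : G.Walk x y, 5 ≤ w.length) :
    IsErrLD G Sbarᶜ := by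
  refine errLD_of_distant_nondetectors_general G (fun v => (hcubic v).ge) (fun u v huv => ?_)
    Sbar hfar
  exact htf.privateNbhd_nonempty huv (Set.finite_of_encard_eq_coe (hcubic v))
    ((hcubic u).trans (hcubic v).symm).le
end

section
/- Every ERR:LD set of the infinite square grid SQ has density at least 3/5, and there exists an ERR:LD set of SQ whose density is at most 2/3. -/
open scoped symmDiff

variable {V : Type*}

/-- The ball of radius `r` around `v₀` in graph distance. -/
def ballSet (G : SimpleGraph V) (v₀ : V) (r : ℕ) : Set V := {u | G.dist v₀ u ≤ r}

/-- The (upper) density of a vertex set `S`, relative to base vertex `v₀`. -/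
noncomputable def density (G : SimpleGraph V) (S : Set V) (v₀ : V) : ℝ :=
  Filter.limsup (fun r : ℕ =>
    ((S ∩ ballSet G v₀ r).ncard : ℝ) / ((ballSet G v₀ r).ncard : ℝ)) Filter.atTop

/-- The infinite square grid on `ℤ × ℤ`. -/
def squareGrid : SimpleGraph (ℤ × ℤ) :=
  SimpleGraph.fromRel (fun p q =>
    (p.2 = q.2 ∧ p.1 = q.1 + 1) ∨ (p.1 = q.1 ∧ p.2 = q.2 + 1))

/-!
Everything is double counting over windows `W v ⊆ N[v]`. If each `v ∈ A` sees at least `m` vertices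
of `C` in its window and each `u ∈ C` is seen by at most `n` vertices of `A`, then
`m |A ∩ B_r| ≤ n |C ∩ B_{r+1}|`, and passing from `B_{r+1}` back to `B_r` is free in the limit
because balls of the grid grow quadratically. The window `N[v]` (five vertices, at least three of
them in `S`) gives the lower bound `3/5`. For the upper bound take the vertices whose coordinate sum
is not divisible by `3`: every horizontal window of three vertices contains exactly two of them.

That this set is ERR:LD follows from the grid being triangle-free with at most two common neighbors
for any two vertices: vertices outside the set keep all four neighbors, vertices inside keep two,
which determine them.
-/

open Filter Topology

section Balls

variable {G : SimpleGraph V} {v₀ u v : V} {r : ℕ}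

theorem mem_closedNbhd_comm : u ∈ closedNbhd G v ↔ v ∈ closedNbhd G u := by
  simp only [closedNbhd, Set.mem_insert_iff, SimpleGraph.mem_neighborSet, G.adj_comm, eq_comm]

theorem mem_ballSet_self : v₀ ∈ ballSet G v₀ r := by
  simp [ballSet]

theorem ballSet_mono : Monotone (ballSet G v₀) :=
  fun _ _ hrs _ hv ↦ le_trans hv hrs

theorem mem_ballSet_succ_of_mem_closedNbhd (hv : v ∈ ballSet G v₀ r) (hu : u ∈ closedNbhd G v) :
    u ∈ ballSet G v₀ (r + 1) := by
  obtain rfl | hadj := hu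
  · exact ballSet_mono r.le_succ hv
  · have hdist := SimpleGraph.Adj.diff_dist_adj (u := v₀) hadj
    simp only [ballSet, Set.mem_ofPred_eq] at hv ⊢
    omega

/-- The balls around `v₀` form a Følner sequence: `|B_{r+1}| / |B_r| → 1`. Since an infinite ball
has `ncard` zero, this includes the finiteness of all balls. -/
def HasFolnerBalls (G : SimpleGraph V) (v₀ : V) : Prop :=
  Tendsto (fun r : ℕ ↦ ((ballSet G v₀ (r + 1)).ncard : ℝ) / (ballSet G v₀ r).ncard) atTop (𝓝 1)

theorem HasFolnerBalls.finite_ballSet (hG : HasFolnerBalls G v₀) (r : ℕ) :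
    (ballSet G v₀ r).Finite := by
  have hpos : ∀ᶠ s : ℕ in atTop,
      (0 : ℝ) < (ballSet G v₀ (s + 1)).ncard / (ballSet G v₀ s).ncard :=
    hG.eventually_const_lt one_pos
  obtain ⟨s, hs, hrs⟩ := (hpos.and (eventually_ge_atTop r)).exists
  have hcard : (ballSet G v₀ s).ncard ≠ 0 := fun h ↦ by simp [h] at hs
  exact (Set.finite_of_ncard_ne_zero hcard).subset (ballSet_mono hrs)

theorem HasFolnerBalls.ncard_ballSet_pos (hG : HasFolnerBalls G v₀) (r : ℕ) :
    0 < (ballSet G v₀ r).ncard :=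
  (Set.ncard_pos (hG.finite_ballSet r)).2 ⟨v₀, mem_ballSet_self⟩

end Balls

section Density

variable {G : SimpleGraph V} {v₀ : V}

/-- The proportion of the ball `B_r(v₀)` that lies in `S`; the density of `S` is the limsup of
these proportions. -/
noncomputable def ballRatio (G : SimpleGraph V) (S : Set V) (v₀ : V) (r : ℕ) : ℝ :=
  (S ∩ ballSet G v₀ r).ncard / (ballSet G v₀ r).ncard

theorem density_eq_limsup_ballRatio (G : SimpleGraph V) (S : Set V) (v₀ : V) :
    density G S v₀ = limsup (ballRatio G S v₀) atTop :=
  rfl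

theorem ballRatio_nonneg (S : Set V) (r : ℕ) : 0 ≤ ballRatio G S v₀ r := by
  unfold ballRatio
  positivity

theorem HasFolnerBalls.ballRatio_le_one (hG : HasFolnerBalls G v₀) (S : Set V) (r : ℕ) :
    ballRatio G S v₀ r ≤ 1 :=
  div_le_one_of_le₀
    (mod_cast Set.ncard_le_ncard Set.inter_subset_right (hG.finite_ballSet r)) (Nat.cast_nonneg _)

theorem HasFolnerBalls.isBoundedUnder_ballRatio (hG : HasFolnerBalls G v₀) (S : Set V) :
    IsBoundedUnder (· ≤ ·) atTop (ballRatio G S v₀) :=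
  isBoundedUnder_of ⟨1, hG.ballRatio_le_one S⟩

theorem HasFolnerBalls.density_nonneg (hG : HasFolnerBalls G v₀) (S : Set V) :
    0 ≤ density G S v₀ :=
  le_limsup_of_frequently_le (.of_forall (ballRatio_nonneg S)) (hG.isBoundedUnder_ballRatio S)

theorem HasFolnerBalls.density_univ (hG : HasFolnerBalls G v₀) :
    density G Set.univ v₀ = 1 := by
  have hratio : ballRatio G Set.univ v₀ = fun _ ↦ 1 := by
    ext r
    rw [ballRatio, Set.univ_inter, div_self (mod_cast (hG.ncard_ballSet_pos r).ne')]
  rw [density_eq_limsup_ballRatio, hratio, limsup_const]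

end Density

section DoubleCounting

theorem mul_ncard_le_mul_ncard {α β : Type*} {s : Set α} {t : Set β} (hs : s.Finite) (ht : t.Finite)
    {R : α → β → Prop} {m n : ℕ} (hm : ∀ a ∈ s, m ≤ {b ∈ t | R a b}.encard)
    (hn : ∀ b ∈ t, {a ∈ s | R a b}.encard ≤ n) : m * s.ncard ≤ n * t.ncard := by
  classical
  lift s to Finset α using hs
  lift t to Finset β using ht
  simp only [Finset.mem_coe, ← Finset.coe_filter, Set.encard_coe_eq_coe_finsetCard,
    Nat.cast_le] at hm hn
  simpa only [Set.ncard_coe_finset, mul_comm] using Finset.card_mul_le_card_mul R hm hn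

variable {G : SimpleGraph V} {v₀ : V} {A C S : Set V} {W : V → Set V} {m n k : ℕ}

theorem HasFolnerBalls.mul_ncard_inter_ballSet_le (hG : HasFolnerBalls G v₀)
    (hW : ∀ v ∈ A, W v ⊆ closedNbhd G v) (hA : ∀ v ∈ A, m ≤ (W v ∩ C).encard)
    (hC : ∀ u ∈ C, {v ∈ A | u ∈ W v}.encard ≤ n) (r : ℕ) :
    m * (A ∩ ballSet G v₀ r).ncard ≤ n * (C ∩ ballSet G v₀ (r + 1)).ncard := by
  refine mul_ncard_le_mul_ncard (R := fun v u ↦ u ∈ W v) ((hG.finite_ballSet _).inter_of_right _)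
    ((hG.finite_ballSet _).inter_of_right _) ?_ ?_
  · rintro v ⟨hvA, hvr⟩
    refine (hA v hvA).trans (Set.encard_le_encard ?_)
    rintro u ⟨huW, huC⟩
    exact ⟨⟨huC, mem_ballSet_succ_of_mem_closedNbhd hvr (hW v hvA huW)⟩, huW⟩
  · rintro u ⟨huC, -⟩
    have hsub : {v ∈ A ∩ ballSet G v₀ r | u ∈ W v} ⊆ {v ∈ A | u ∈ W v} := fun v hv ↦ ⟨hv.1.1, hv.2⟩
    exact (Set.encard_le_encard hsub).trans (hC u huC)

theorem HasFolnerBalls.ballRatio_le (hG : HasFolnerBalls G v₀)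
    (hW : ∀ v ∈ A, W v ⊆ closedNbhd G v) (hm : 0 < m) (hA : ∀ v ∈ A, m ≤ (W v ∩ C).encard)
    (hC : ∀ u ∈ C, {v ∈ A | u ∈ W v}.encard ≤ n) (r : ℕ) :
    ballRatio G A v₀ r ≤ ballRatio G C v₀ (r + 1) *
      (n / m * ((ballSet G v₀ (r + 1)).ncard / (ballSet G v₀ r).ncard)) := by
  have hm' : (0 : ℝ) < m := mod_cast hm
  have hcount : (m * (A ∩ ballSet G v₀ r).ncard : ℝ) ≤ n * (C ∩ ballSet G v₀ (r + 1)).ncard :=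
    mod_cast hG.mul_ncard_inter_ballSet_le hW hA hC r
  have hr : (0 : ℝ) < (ballSet G v₀ r).ncard := mod_cast hG.ncard_ballSet_pos r
  have hr' : (0 : ℝ) < (ballSet G v₀ (r + 1)).ncard := mod_cast hG.ncard_ballSet_pos (r + 1)
  simp only [ballRatio]
  field_simp
  linarith

theorem HasFolnerBalls.mul_density_le_mul_density (hG : HasFolnerBalls G v₀)
    (hW : ∀ v ∈ A, W v ⊆ closedNbhd G v) (hA : ∀ v ∈ A, m ≤ (W v ∩ C).encard)
    (hC : ∀ u ∈ C, {v ∈ A | u ∈ W v}.encard ≤ n) :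
    m * density G A v₀ ≤ n * density G C v₀ := by
  obtain rfl | hm := m.eq_zero_or_pos
  · simpa using mul_nonneg n.cast_nonneg (hG.density_nonneg C)
  have hm' : (0 : ℝ) < m := mod_cast hm
  let growth (r : ℕ) : ℝ :=
    n / m * ((ballSet G v₀ (r + 1)).ncard / (ballSet G v₀ r).ncard)
  have hgrowth : Tendsto growth atTop (𝓝 (n / m)) := by simpa using hG.const_mul (n / m : ℝ)
  have hgrowth_nonneg : ∀ r, 0 ≤ growth r := fun r ↦ by positivity
  have hbdd : IsBoundedUnder (· ≤ ·) atTop fun r ↦ ballRatio G C v₀ (r + 1) :=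
    isBoundedUnder_of ⟨1, fun r ↦ hG.ballRatio_le_one C (r + 1)⟩
  have hnonneg : ∃ᶠ r in atTop, 0 ≤ ballRatio G C v₀ (r + 1) :=
    .of_forall fun r ↦ ballRatio_nonneg C (r + 1)
  have hlimsup : density G A v₀ ≤ density G C v₀ * (n / m) := calc
    density G A v₀
      ≤ limsup (fun r ↦ ballRatio G C v₀ (r + 1) * growth r) atTop :=
        limsup_le_limsup (.of_forall (hG.ballRatio_le hW hm hA hC))
          (isBoundedUnder_of ⟨0, ballRatio_nonneg A⟩ :
            IsBoundedUnder (· ≥ ·) _ _).isCoboundedUnder_le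
          (isBoundedUnder_le_mul_of_nonneg hnonneg hbdd (.of_forall hgrowth_nonneg)
            hgrowth.isBoundedUnder_le)
    _ ≤ limsup (fun r ↦ ballRatio G C v₀ (r + 1)) atTop * limsup growth atTop :=
        limsup_mul_le hnonneg hbdd (.of_forall hgrowth_nonneg) hgrowth.isBoundedUnder_le
    _ = density G C v₀ * (n / m) := by
        rw [limsup_nat_add, hgrowth.limsup_eq, density_eq_limsup_ballRatio]
  calc m * density G A v₀ ≤ m * (density G C v₀ * (n / m)) := by gcongr
    _ = n * density G C v₀ := by rw [mul_left_comm, mul_div_cancel₀ _ hm'.ne', mul_comm]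

theorem HasFolnerBalls.div_le_density (hG : HasFolnerBalls G v₀)
    (hW : ∀ v, W v ⊆ closedNbhd G v) (hS : ∀ v, k ≤ (W v ∩ S).encard)
    (hn : ∀ u ∈ S, {v | u ∈ W v}.encard ≤ n) : (k / n : ℝ) ≤ density G S v₀ := by
  have hmul : (k * density G Set.univ v₀ : ℝ) ≤ n * density G S v₀ :=
    hG.mul_density_le_mul_density (fun v _ ↦ hW v) (fun v _ ↦ hS v) (by simpa using hn)
  rw [hG.density_univ, mul_one, mul_comm] at hmul
  exact div_le_of_le_mul₀ n.cast_nonneg (hG.density_nonneg S) hmul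

theorem HasFolnerBalls.density_le_div (hG : HasFolnerBalls G v₀)
    (hW : ∀ v, W v ⊆ closedNbhd G v) (hS : ∀ v, (W v ∩ S).encard ≤ k) (hn₀ : 0 < n)
    (hn : ∀ u ∈ S, n ≤ {v | u ∈ W v}.encard) : density G S v₀ ≤ k / n := by
  have hmul : (n * density G S v₀ : ℝ) ≤ k * density G Set.univ v₀ :=
    hG.mul_density_le_mul_density (W := fun u ↦ {v | u ∈ W v})
      (fun _ _ v hv ↦ mem_closedNbhd_comm.1 (hW v hv)) (by simpa using hn)
      (fun v _ ↦ (Set.inter_comm (W v) S ▸ hS v :))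
  rw [hG.density_univ, mul_one, mul_comm] at hmul
  exact (le_div_iff₀ (mod_cast hn₀)).2 hmul

end DoubleCounting

section TriangleFree

variable {G : SimpleGraph V} {S : Set V} {u v : V}

theorem disjoint_neighborSet_of_adj (hG : G.CliqueFree 3) (huv : G.Adj u v) :
    Disjoint (G.neighborSet u) (G.neighborSet v) := by
  classical
  exact Set.disjoint_left.2 fun w hu hv ↦
    hG {u, v, w} (SimpleGraph.is3Clique_triple_iff.2 ⟨huv, hu, hv⟩)

theorem sdiff_singleton_subset_symmDiff_of_adj (hG : G.CliqueFree 3) (hvu : G.Adj v u) :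
    (G.neighborSet v ∩ S) \ {u} ⊆
      ((G.neighborSet v ∩ S) ∆ (G.neighborSet u ∩ S)) \ {v, u} := by
  rintro w ⟨hw, hwu⟩
  have hwu' : w ∉ G.neighborSet u := (disjoint_neighborSet_of_adj hG hvu).notMem_of_mem_left hw.1
  have hwv : w ≠ v := fun h ↦ G.notMem_neighborSet_self (h ▸ hw.1)
  exact ⟨.inl ⟨hw, fun h ↦ hwu' h.1⟩, by simp_all⟩

theorem symmDiff_subset_sdiff_pair_of_not_adj (hvu : ¬ G.Adj v u) :
    (G.neighborSet v ∩ S) ∆ (G.neighborSet u ∩ S) ⊆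
      ((G.neighborSet v ∩ S) ∆ (G.neighborSet u ∩ S)) \ {v, u} := by
  refine fun w hw ↦ ⟨hw, ?_⟩
  rintro (rfl | rfl)
  · simp [Set.mem_symmDiff, G.adj_comm u, hvu] at hw
  · simp [Set.mem_symmDiff, hvu] at hw

theorem two_le_encard_neighborSet_inter_sdiff (hcommon : (G.commonNeighbors v u).encard ≤ 2)
    (hv : 4 ≤ (G.neighborSet v ∩ S).encard) :
    2 ≤ ((G.neighborSet v ∩ S) \ (G.neighborSet u ∩ S)).encard := by
  have hinter : ((G.neighborSet v ∩ S) ∩ (G.neighborSet u ∩ S)).encard ≤ 2 :=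
    le_trans (Set.encard_le_encard
      (Set.inter_subset_inter Set.inter_subset_left Set.inter_subset_left)) hcommon
  calc (2 : ℕ∞) = 4 - 2 := rfl
    _ ≤ (G.neighborSet v ∩ S).encard - ((G.neighborSet v ∩ S) ∩ (G.neighborSet u ∩ S)).encard :=
        tsub_le_tsub hv hinter
    _ ≤ ((G.neighborSet v ∩ S) \ ((G.neighborSet v ∩ S) ∩ (G.neighborSet u ∩ S))).encard :=
        Set.tsub_encard_le_encard_sdiff _ _
    _ = ((G.neighborSet v ∩ S) \ (G.neighborSet u ∩ S)).encard := by rw [Set.sdiff_self_inter]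

theorem three_le_encard_closedNbhd_inter (hin : v ∈ S → 2 ≤ (G.neighborSet v ∩ S).encard)
    (hout : v ∉ S → 3 ≤ (G.neighborSet v ∩ S).encard) : 3 ≤ (closedNbhd G v ∩ S).encard := by
  by_cases hv : v ∈ S
  · have hv' : v ∉ G.neighborSet v ∩ S := fun h ↦ G.notMem_neighborSet_self h.1
    rw [closedNbhd, Set.insert_inter_of_mem hv, Set.encard_insert_of_notMem hv']
    exact add_le_add_left (hin hv) 1
  · exact (hout hv).trans
      (Set.encard_le_encard (Set.inter_subset_inter_left S (Set.subset_insert _ _)))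

theorem isErrLD_of_cliqueFree_three (hG : G.CliqueFree 3)
    (hcommon : ∀ v u, v ≠ u → (G.commonNeighbors v u).encard ≤ 2)
    (hin : ∀ v ∈ S, 2 ≤ (G.neighborSet v ∩ S).encard)
    (hout : ∀ v ∉ S, 4 ≤ (G.neighborSet v ∩ S).encard)
    (hinj : S.InjOn fun v ↦ G.neighborSet v ∩ S) : IsErrLD G S := by
  refine ⟨fun v ↦ ?_, fun v hv u hu huv ↦ ?_, fun v hv u hu ↦ ?_, fun v hv u hu huv ↦ ?_⟩
  · exact three_le_encard_closedNbhd_inter (hin v) fun hv ↦ le_trans (by norm_num) (hout v hv)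
  · rw [Set.one_le_encard_iff_nonempty]
    by_cases hvu : G.Adj v u
    · have hone : 1 < (G.neighborSet v ∩ S).encard := lt_of_lt_of_le (by norm_num) (hin v hv)
      obtain ⟨w, hw, hwu⟩ := Set.exists_ne_of_one_lt_encard hone u
      exact ⟨w, sdiff_singleton_subset_symmDiff_of_adj hG hvu ⟨hw, hwu⟩⟩
    · have hne : G.neighborSet v ∩ S ≠ G.neighborSet u ∩ S := fun h ↦ huv (hinj hv hu h).symm
      exact (Set.symmDiff_nonempty.2 hne).mono (symmDiff_subset_sdiff_pair_of_not_adj hvu)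
  · refine le_trans ?_ (Set.encard_le_encard
      (Set.sdiff_subset_sdiff_right (Set.subset_insert v {u})))
    by_cases hvu : G.Adj v u
    · calc (2 : ℕ∞) ≤ 4 - 1 := by decide
        _ ≤ (G.neighborSet v ∩ S).encard - 1 := tsub_le_tsub_right (hout v hv) 1
        _ ≤ ((G.neighborSet v ∩ S) \ {u}).encard :=
            Set.encard_tsub_one_le_encard_sdiff_singleton _ _
        _ ≤ _ := Set.encard_le_encard (sdiff_singleton_subset_symmDiff_of_adj hG hvu)
    · have hne : v ≠ u := fun h ↦ hv (h ▸ hu)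
      calc (2 : ℕ∞) ≤ ((G.neighborSet v ∩ S) \ (G.neighborSet u ∩ S)).encard :=
            two_le_encard_neighborSet_inter_sdiff (hcommon v u hne) (hout v hv)
        _ ≤ ((G.neighborSet v ∩ S) ∆ (G.neighborSet u ∩ S)).encard :=
            Set.encard_le_encard Set.subset_union_left
        _ ≤ _ := Set.encard_le_encard (symmDiff_subset_sdiff_pair_of_not_adj hvu)
  · rw [Set.symmDiff_def, Set.encard_union_eq disjoint_sdiff_sdiff]
    calc (3 : ℕ∞) ≤ 2 + 2 := by norm_num
      _ ≤ _ := add_le_add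
          (two_le_encard_neighborSet_inter_sdiff (hcommon v u huv.symm) (hout v hv))
          (two_le_encard_neighborSet_inter_sdiff (hcommon u v huv) (hout u hu))

end TriangleFree

section SquareGrid

open SimpleGraph

theorem squareGrid_adj {a b c d : ℤ} : squareGrid.Adj (a, b) (c, d) ↔
    c = a + 1 ∧ d = b ∨ c = a - 1 ∧ d = b ∨ c = a ∧ d = b + 1 ∨ c = a ∧ d = b - 1 := by
  simp only [squareGrid, fromRel_adj, ne_eq, Prod.mk.injEq]
  omega

theorem squareGrid_eq_hasse : squareGrid = hasse (ℤ × ℤ) := by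
  ext ⟨a, b⟩ ⟨c, d⟩
  simp only [squareGrid_adj, hasse_prod, boxProd_adj, hasse_adj, Order.covBy_iff_add_one_eq]
  omega

theorem natAbs_sub_le_length {a b : ℤ} (p : (hasse ℤ).Walk a b) : (a - b).natAbs ≤ p.length := by
  induction p with
  | nil => simp
  | cons hadj p ih =>
    rw [hasse_adj, Order.covBy_iff_add_one_eq, Order.covBy_iff_add_one_eq] at hadj
    rw [Walk.length_cons]
    omega

theorem edist_hasse_add_natCast_le (a : ℤ) (n : ℕ) : (hasse ℤ).edist a (a + n) ≤ n := by
  induction n with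
  | zero => simp
  | succ n ih =>
    have hadj : (hasse ℤ).Adj (a + n) (a + (n + 1 : ℕ)) := by
      rw [hasse_adj, Order.covBy_iff_add_one_eq]
      omega
    calc (hasse ℤ).edist a (a + (n + 1 : ℕ))
        ≤ (hasse ℤ).edist a (a + n) + (hasse ℤ).edist (a + n) (a + (n + 1 : ℕ)) :=
          SimpleGraph.edist_triangle
      _ ≤ n + 1 := add_le_add ih (edist_eq_one_iff_adj.2 hadj).le
      _ = (n + 1 : ℕ) := by push_cast; rfl

theorem edist_hasse_int (a b : ℤ) : (hasse ℤ).edist a b = (a - b).natAbs := by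
  apply le_antisymm
  · wlog hab : a ≤ b generalizing a b
    · rw [edist_comm, ← neg_sub, Int.natAbs_neg]
      exact this b a (le_of_not_ge hab)
    · have hb : b = a + (a - b).natAbs := by omega
      conv_lhs => rw [hb]
      exact edist_hasse_add_natCast_le a _
  · exact le_iInf fun p ↦ mod_cast natAbs_sub_le_length p

theorem dist_squareGrid (u v : ℤ × ℤ) :
    squareGrid.dist u v = (u.1 - v.1).natAbs + (u.2 - v.2).natAbs := by
  rw [SimpleGraph.dist, squareGrid_eq_hasse, hasse_prod, edist_boxProd, edist_hasse_int,
    edist_hasse_int]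
  rfl

/-- An affine copy of the square `[0, n)²`, rotated by 45 degrees about `v`: the points of the
`ℓ¹`-ball of radius `n - 1` around `v` at a distance from `v` of the same parity as `n - 1`. -/
def diamond (v : ℤ × ℤ) (n : ℕ) : Finset (ℤ × ℤ) :=
  (Finset.range n ×ˢ Finset.range n).image fun p ↦ (v.1 + p.1 + p.2 - n + 1, v.2 + p.1 - p.2)

theorem mem_diamond {v p : ℤ × ℤ} {n : ℕ} : p ∈ diamond v n ↔
    (v.1 - p.1).natAbs + (v.2 - p.2).natAbs < n ∧ (p.1 - v.1 + (p.2 - v.2) + n) % 2 = 1 := by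
  simp only [diamond, Finset.mem_image, Finset.mem_product, Finset.mem_range, Prod.exists,
    Prod.ext_iff]
  constructor
  · rintro ⟨i, j, hij, hx, hy⟩
    omega
  · intro h
    exact ⟨((p.1 - v.1 + (p.2 - v.2) + n - 1) / 2).toNat,
      ((p.1 - v.1 - (p.2 - v.2) + n - 1) / 2).toNat, by omega⟩

theorem card_diamond (v : ℤ × ℤ) (n : ℕ) : (diamond v n).card = n ^ 2 := by
  rw [diamond, Finset.card_image_of_injective, Finset.card_product, Finset.card_range, sq]
  rintro ⟨i, j⟩ ⟨k, l⟩ h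
  simp only [Prod.mk.injEq] at h ⊢
  omega

theorem ncard_ballSet_squareGrid (v : ℤ × ℤ) (r : ℕ) :
    (ballSet squareGrid v r).ncard = (r + 1) ^ 2 + r ^ 2 := by
  have hball : ballSet squareGrid v r = ↑(diamond v (r + 1) ∪ diamond v r) := by
    ext p
    simp only [ballSet, dist_squareGrid, Set.mem_ofPred_eq, Finset.mem_coe, Finset.mem_union,
      mem_diamond]
    omega
  have hdisj : Disjoint (diamond v (r + 1)) (diamond v r) := by
    refine Finset.disjoint_left.2 fun p hp hp' ↦ ?_
    rw [mem_diamond] at hp hp'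
    omega
  rw [hball, Set.ncard_coe_finset, Finset.card_union_of_disjoint hdisj, card_diamond, card_diamond]

theorem hasFolnerBalls_squareGrid (v : ℤ × ℤ) : HasFolnerBalls squareGrid v := by
  have hupper : Tendsto (fun r : ℕ ↦ 1 + 4 * (1 / ((r : ℝ) + 1))) atTop (𝓝 1) := by
    simpa using (tendsto_one_div_add_atTop_nhds_zero_nat.const_mul (4 : ℝ)).const_add 1
  refine tendsto_of_tendsto_of_tendsto_of_le_of_le tendsto_const_nhds hupper ?_ ?_ <;> intro r <;>
    simp only [ncard_ballSet_squareGrid] <;> push_cast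
  · rw [le_div_iff₀ (by positivity)]
    linarith [sq_nonneg (r : ℝ), (r.cast_nonneg : (0 : ℝ) ≤ r)]
  · rw [div_le_iff₀ (by positivity)]
    field_simp
    nlinarith

theorem encard_commonNeighbors_squareGrid_le (u v : ℤ × ℤ) (huv : u ≠ v) :
    (squareGrid.commonNeighbors u v).encard ≤ 2 := by
  obtain ⟨a, b⟩ := u
  obtain ⟨c, d⟩ := v
  rw [ne_eq, Prod.mk.injEq] at huv
  suffices h : ∃ p q, squareGrid.commonNeighbors (a, b) (c, d) ⊆ {p, q} by
    obtain ⟨p, q, hpq⟩ := h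
    exact (Set.encard_le_encard hpq).trans ((Set.encard_insert_le {q} p).trans
      (by rw [Set.encard_singleton, one_add_one_eq_two]))
  by_cases hline : a = c ∨ b = d
  · refine ⟨((a + c) / 2, (b + d) / 2), ((a + c) / 2, (b + d) / 2), ?_⟩
    rintro ⟨x, y⟩ h
    simp only [mem_commonNeighbors, squareGrid_adj, Set.mem_insert_iff, Set.mem_singleton_iff,
      Prod.mk.injEq] at h ⊢
    omega
  · refine ⟨(a, d), (c, b), ?_⟩
    rintro ⟨x, y⟩ h
    simp only [mem_commonNeighbors, squareGrid_adj, Set.mem_insert_iff, Set.mem_singleton_iff,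
      Prod.mk.injEq] at h ⊢
    omega

theorem neighborSet_squareGrid (a b : ℤ) :
    squareGrid.neighborSet (a, b) = {(a + 1, b), (a - 1, b), (a, b + 1), (a, b - 1)} := by
  ext ⟨c, d⟩
  simp [squareGrid_adj]

theorem encard_neighborSet_squareGrid (v : ℤ × ℤ) : (squareGrid.neighborSet v).encard = 4 := by
  obtain ⟨a, b⟩ := v
  rw [neighborSet_squareGrid, Set.encard_insert_of_notMem, Set.encard_insert_of_notMem,
    Set.encard_pair]
  · norm_num
  all_goals simp only [Set.mem_insert_iff, Set.mem_singleton_iff, Prod.mk.injEq, ne_eq]; omega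

theorem encard_closedNbhd_squareGrid (v : ℤ × ℤ) : (closedNbhd squareGrid v).encard = 5 := by
  rw [closedNbhd, Set.encard_insert_of_notMem (squareGrid.notMem_neighborSet_self),
    encard_neighborSet_squareGrid]
  norm_num

end SquareGrid

section Stripes

/-- The square grid with every third antidiagonal removed; the periodic set of density `2/3`. -/
def antidiagonalStripes : Set (ℤ × ℤ) := {p | ¬ 3 ∣ p.1 + p.2}

theorem mem_antidiagonalStripes {a b : ℤ} : (a, b) ∈ antidiagonalStripes ↔ ¬ 3 ∣ a + b :=
  Iff.rfl

theorem neighborSet_subset_antidiagonalStripes {v : ℤ × ℤ} (hv : v ∉ antidiagonalStripes) :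
    squareGrid.neighborSet v ⊆ antidiagonalStripes := by
  obtain ⟨a, b⟩ := v
  rintro ⟨c, d⟩ h
  rw [SimpleGraph.mem_neighborSet, squareGrid_adj] at h
  rw [mem_antidiagonalStripes] at hv ⊢
  omega

-- If `a + b ≡ ε = ±1` mod 3, then the two steps by `ε` lead to `2ε ≡ -ε`, those by `-ε` to `0`.
theorem exists_neighborSet_inter_antidiagonalStripes {a b : ℤ}
    (hab : (a, b) ∈ antidiagonalStripes) : ∃ ε : ℤ, (ε = 1 ∨ ε = -1) ∧ 3 ∣ a + b - ε ∧
      squareGrid.neighborSet (a, b) ∩ antidiagonalStripes = {(a + ε, b), (a, b + ε)} := by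
  rw [mem_antidiagonalStripes] at hab
  obtain ⟨ε, hε, hdvd⟩ : ∃ ε : ℤ, (ε = 1 ∨ ε = -1) ∧ 3 ∣ a + b - ε := by
    obtain h | h : 3 ∣ a + b - 1 ∨ 3 ∣ a + b - -1 := by omega
    exacts [⟨1, .inl rfl, h⟩, ⟨-1, .inr rfl, h⟩]
  refine ⟨ε, hε, hdvd, ?_⟩
  ext ⟨c, d⟩
  simp only [Set.mem_inter_iff, SimpleGraph.mem_neighborSet, squareGrid_adj,
    mem_antidiagonalStripes, Set.mem_insert_iff, Set.mem_singleton_iff, Prod.mk.injEq]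
  omega

theorem injOn_neighborSet_inter_antidiagonalStripes :
    antidiagonalStripes.InjOn fun v ↦ squareGrid.neighborSet v ∩ antidiagonalStripes := by
  rintro ⟨a, b⟩ hab ⟨c, d⟩ hcd heq
  obtain ⟨ε, -, hεdvd, hεeq⟩ := exists_neighborSet_inter_antidiagonalStripes hab
  obtain ⟨δ, hδ, hδdvd, hδeq⟩ := exists_neighborSet_inter_antidiagonalStripes hcd
  simp only [hεeq, hδeq, Set.pair_eq_pair_iff, Prod.mk.injEq] at heq
  rw [Prod.mk.injEq]
  omega

theorem isErrLD_antidiagonalStripes : IsErrLD squareGrid antidiagonalStripes := by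
  refine isErrLD_of_cliqueFree_three ?_ ?_ ?_ ?_ injOn_neighborSet_inter_antidiagonalStripes
  · rw [squareGrid_eq_hasse]
    exact SimpleGraph.cliqueFree_hasse_three
  · exact encard_commonNeighbors_squareGrid_le
  · rintro ⟨a, b⟩ hv
    obtain ⟨ε, hε, -, heq⟩ := exists_neighborSet_inter_antidiagonalStripes hv
    rw [heq, Set.encard_pair]
    simp only [ne_eq, Prod.mk.injEq]
    omega
  · intro v hv
    rw [Set.inter_eq_left.2 (neighborSet_subset_antidiagonalStripes hv),
      encard_neighborSet_squareGrid]

/-- Three horizontally consecutive vertices centered at `v`, the window used to compute the density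
of `antidiagonalStripes`. -/
def rowWindow (v : ℤ × ℤ) : Set (ℤ × ℤ) := {(v.1 - 1, v.2), v, (v.1 + 1, v.2)}

theorem rowWindow_subset_closedNbhd (v : ℤ × ℤ) : rowWindow v ⊆ closedNbhd squareGrid v := by
  obtain ⟨a, b⟩ := v
  simp only [rowWindow, closedNbhd, neighborSet_squareGrid]
  grind

theorem encard_setOf_mem_rowWindow (u : ℤ × ℤ) : {v | u ∈ rowWindow v}.encard = 3 := by
  obtain ⟨a, b⟩ := u
  have hsymm : {v | (a, b) ∈ rowWindow v} = {(a - 1, b), (a, b), (a + 1, b)} := by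
    ext ⟨c, d⟩
    simp only [rowWindow, Set.mem_ofPred_eq, Set.mem_insert_iff, Set.mem_singleton_iff,
      Prod.mk.injEq]
    omega
  rw [hsymm, Set.encard_eq_three]
  exact ⟨_, _, _, by simp, by simp; omega, by simp, rfl⟩

theorem encard_rowWindow_inter_antidiagonalStripes (v : ℤ × ℤ) :
    (rowWindow v ∩ antidiagonalStripes).encard = 2 := by
  obtain ⟨a, b⟩ := v
  obtain ⟨i, j, hij, hwindow⟩ : ∃ i j : ℤ, i ≠ j ∧ ∀ c : ℤ,
      (c = a - 1 ∨ c = a ∨ c = a + 1) ∧ ¬ 3 ∣ c + b ↔ c = i ∨ c = j := by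
    obtain h | h | h : 3 ∣ a - 1 + b ∨ 3 ∣ a + b ∨ 3 ∣ a + 1 + b := by omega
    exacts [⟨a, a + 1, by omega, by omega⟩, ⟨a - 1, a + 1, by omega, by omega⟩,
      ⟨a - 1, a, by omega, by omega⟩]
  refine Set.encard_eq_two.2 ⟨(i, b), (j, b), by simpa using hij, ?_⟩
  ext ⟨c, d⟩
  simp only [rowWindow, Set.mem_inter_iff, mem_antidiagonalStripes, Set.mem_insert_iff,
    Set.mem_singleton_iff, Prod.mk.injEq]
  grind

theorem density_antidiagonalStripes (v₀ : ℤ × ℤ) :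
    density squareGrid antidiagonalStripes v₀ = 2 / 3 := by
  have hG := hasFolnerBalls_squareGrid v₀
  apply le_antisymm
  · exact_mod_cast hG.density_le_div (k := 2) (n := 3) rowWindow_subset_closedNbhd
      (fun v ↦ (encard_rowWindow_inter_antidiagonalStripes v).le) three_pos
      fun u _ ↦ (encard_setOf_mem_rowWindow u).ge
  · exact_mod_cast hG.div_le_density (k := 2) (n := 3) rowWindow_subset_closedNbhd
      (fun v ↦ (encard_rowWindow_inter_antidiagonalStripes v).ge)
      fun u _ ↦ (encard_setOf_mem_rowWindow u).le

end Stripes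

theorem errLD_density_square_general (v₀ : ℤ × ℤ) :
    (∀ S : Set (ℤ × ℤ), (∀ v, 3 ≤ (closedNbhd squareGrid v ∩ S).encard) →
      3 / 5 ≤ density squareGrid S v₀) ∧
    ∃ S : Set (ℤ × ℤ), IsErrLD squareGrid S ∧ density squareGrid S v₀ = 2 / 3 := by
  refine ⟨fun S hS ↦ ?_, antidiagonalStripes, isErrLD_antidiagonalStripes,
    density_antidiagonalStripes v₀⟩
  have hfive (u : ℤ × ℤ) : {v | u ∈ closedNbhd squareGrid v}.encard ≤ 5 := by
    simp only [mem_closedNbhd_comm (u := u), Set.ofPred_mem_eq, encard_closedNbhd_squareGrid,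
      le_rfl]
  exact_mod_cast (hasFolnerBalls_squareGrid v₀).div_le_density (k := 3) (n := 5)
    (fun _ ↦ subset_rfl) hS fun u _ ↦ hfive u

theorem errLD_density_square :
    (∀ S : Set (ℤ × ℤ), IsErrLD squareGrid S →
      (3 : ℝ) / 5 ≤ density squareGrid S ((0 : ℤ), (0 : ℤ))) ∧
    (∃ S : Set (ℤ × ℤ), IsErrLD squareGrid S ∧
      density squareGrid S ((0 : ℤ), (0 : ℤ)) ≤ (2 : ℝ) / 3) := by
  obtain ⟨hlower, S, hS, hdensity⟩ := errLD_density_square_general (0, 0)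
  exact ⟨fun T hT ↦ hlower T hT.1, S, hS, hdensity.le⟩
end
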